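/- Let Δ > 0, let X, Y be real n₁×n₂ matrices with all entries of X and of Y bounded in absolute value by Δ/2, let (i₁,j₁),…,(i_{m'},j_{m'}) be i.i.d. indices uniformly distributed on [n₁]×[n₂], and let τ₁,…,τ_{m'} be i.i.d. uniform on [-Δ/2, Δ/2], independent of the indices. Then the one-bit distance is unbiased: E[ Σ_{k=1}^{m'} (Δ/2)·|sgn(X_{i_k,j_k} + τ_k) - sgn(Y_{i_k,j_k} + τ_k)| ] = (m'/(n₁n₂)) ‖X - Y‖₁. -/

import Mathlib

open MeasureTheory ProbabilityTheory

/-- The uniform probability measure on the interval `[-Δ/2, Δ/2]`. -/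
noncomputable def uniformDither (Δ : ℝ) : Measure ℝ :=
  (ENNReal.ofReal Δ)⁻¹ • volume.restrict (Set.Icc (-(Δ / 2)) (Δ / 2))

/-- The uniform probability measure on the finite index set `Fin n₁ × Fin n₂`. -/
noncomputable def uniformIndex (n₁ n₂ : ℕ) : Measure (Fin n₁ × Fin n₂) :=
  ((n₁ * n₂ : ℕ) : ENNReal)⁻¹ • Measure.count

/-- The entrywise ℓ₁-norm of a real matrix. -/
noncomputable def matL1 {n₁ n₂ : ℕ} (X : Matrix (Fin n₁) (Fin n₂) ℝ) : ℝ :=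
  ∑ i, ∑ j, |X i j|

/-!
For `|x|, |y| ≤ Δ/2` the signs of `x + τ` and `y + τ` differ exactly when `τ` lies between `-x` and
`-y`, apart from at most two values of `τ`. This interval is contained in `[-Δ/2, Δ/2]` and has
length `|x - y|`, so averaging `Δ/2 · |sgn(x + τ) - sgn(y + τ)|` over the dither gives exactly
`|x - y|`. Averaging over the index and linearity of expectation do the rest.
-/

/-- The contribution `Δ/2 · |sgn(x + τ) - sgn(y + τ)|` of a single entry pair `x`, `y` under the
dither `τ` to the one-bit distance. -/
noncomputable def oneBitDist (Δ x y τ : ℝ) : ℝ :=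
  Δ / 2 * |Real.sign (x + τ) - Real.sign (y + τ)|

instance isFiniteMeasure_uniformDither (Δ : ℝ) : IsFiniteMeasure (uniformDither Δ) where
  measure_univ_lt_top := by
    calc uniformDither Δ Set.univ = (ENNReal.ofReal Δ)⁻¹ * ENNReal.ofReal Δ := by
          simp [uniformDither]
      _ ≤ 1 := ENNReal.inv_mul_le_one _
      _ < ⊤ := ENNReal.one_lt_top

instance isFiniteMeasure_uniformIndex (n₁ n₂ : ℕ) : IsFiniteMeasure (uniformIndex n₁ n₂) where
  measure_univ_lt_top := by
    calc uniformIndex n₁ n₂ Set.univ = ((n₁ * n₂ : ℕ) : ENNReal)⁻¹ * ((n₁ * n₂ : ℕ) : ENNReal) := by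
          simp [uniformIndex, Measure.count_univ]
      _ ≤ 1 := ENNReal.inv_mul_le_one _
      _ < ⊤ := ENNReal.one_lt_top

theorem integral_uniformDither {E : Type*} [NormedAddCommGroup E] [NormedSpace ℝ E] {Δ : ℝ}
    (hΔ : 0 ≤ Δ) (f : ℝ → E) :
    ∫ τ, f τ ∂uniformDither Δ = Δ⁻¹ • ∫ τ in Set.Icc (-(Δ / 2)) (Δ / 2), f τ := by
  rw [uniformDither, integral_smul_measure, ENNReal.toReal_inv, ENNReal.toReal_ofReal hΔ]

theorem integral_uniformIndex {E : Type*} [NormedAddCommGroup E] [NormedSpace ℝ E]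
    [CompleteSpace E] {n₁ n₂ : ℕ} (f : Fin n₁ × Fin n₂ → E) :
    ∫ p, f p ∂uniformIndex n₁ n₂ = ((n₁ : ℝ) * n₂)⁻¹ • ∑ i, ∑ j, f (i, j) := by
  rw [uniformIndex, integral_smul_measure, integral_count, Fintype.sum_prod_type]
  simp

theorem measurable_realSign : Measurable Real.sign :=
  Measurable.ite measurableSet_Iio measurable_const
    (Measurable.ite measurableSet_Ioi measurable_const measurable_const)

theorem abs_realSign_sub_realSign_le_two (s t : ℝ) : |Real.sign s - Real.sign t| ≤ 2 := by
  rcases Real.sign_apply_eq s with hs | hs | hs <;>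
    rcases Real.sign_apply_eq t with ht | ht | ht <;> norm_num [hs, ht]

theorem abs_realSign_add_sub_ae_eq_indicator (μ : Measure ℝ) [NullSingletonClass μ] (x y : ℝ) :
    (fun τ => |Real.sign (x + τ) - Real.sign (y + τ)|) =ᵐ[μ]
      (Set.uIoc (-x) (-y)).indicator fun _ => 2 := by
  filter_upwards [μ.ae_ne (-x), μ.ae_ne (-y)] with τ hx hy
  rcases hx.lt_or_gt with hx | hx <;> rcases hy.lt_or_gt with hy | hy
  · have hτ : τ ∉ Set.uIoc (-x) (-y) := by grind [Set.mem_uIoc]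
    simp [hτ, Real.sign_of_neg (show x + τ < 0 by linarith),
      Real.sign_of_neg (show y + τ < 0 by linarith)]
  · have hτ : τ ∈ Set.uIoc (-x) (-y) := by grind [Set.mem_uIoc]
    norm_num [hτ, Real.sign_of_neg (show x + τ < 0 by linarith),
      Real.sign_of_pos (show 0 < y + τ by linarith)]
  · have hτ : τ ∈ Set.uIoc (-x) (-y) := by grind [Set.mem_uIoc]
    norm_num [hτ, Real.sign_of_pos (show 0 < x + τ by linarith),
      Real.sign_of_neg (show y + τ < 0 by linarith)]
  · have hτ : τ ∉ Set.uIoc (-x) (-y) := by grind [Set.mem_uIoc]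
    simp [hτ, Real.sign_of_pos (show 0 < x + τ by linarith),
      Real.sign_of_pos (show 0 < y + τ by linarith)]

theorem setIntegral_abs_realSign_add_sub {x y : ℝ} {s : Set ℝ} (hs : Set.uIoc (-x) (-y) ⊆ s) :
    ∫ τ in s, |Real.sign (x + τ) - Real.sign (y + τ)| = 2 * |x - y| := by
  rw [integral_congr_ae (abs_realSign_add_sub_ae_eq_indicator _ x y),
    setIntegral_indicator measurableSet_uIoc, Set.inter_eq_right.mpr hs, setIntegral_const,
    measureReal_def, Real.volume_uIoc, ENNReal.toReal_ofReal (abs_nonneg _), smul_eq_mul, mul_comm,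
    neg_sub_neg]

theorem integral_oneBitDist_uniformDither {Δ x y : ℝ} (hΔ : 0 < Δ) (hx : |x| ≤ Δ / 2)
    (hy : |y| ≤ Δ / 2) : ∫ τ, oneBitDist Δ x y τ ∂uniformDither Δ = |x - y| := by
  have hsub : Set.uIoc (-x) (-y) ⊆ Set.Icc (-(Δ / 2)) (Δ / 2) :=
    Set.uIoc_subset_uIcc.trans <| Set.uIcc_subset_Icc
      (abs_le.mp <| (abs_neg x).trans_le hx) (abs_le.mp <| (abs_neg y).trans_le hy)
  calc ∫ τ, oneBitDist Δ x y τ ∂uniformDither Δ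
      = Δ⁻¹ * (Δ / 2 * (2 * |x - y|)) := by
        simp only [oneBitDist]
        rw [integral_uniformDither hΔ.le, integral_const_mul,
          setIntegral_abs_realSign_add_sub hsub, smul_eq_mul]
    _ = |x - y| := by field_simp

theorem norm_oneBitDist_le (Δ x y τ : ℝ) : ‖oneBitDist Δ x y τ‖ ≤ |Δ| := by
  calc ‖oneBitDist Δ x y τ‖
      = |Δ| / 2 * |Real.sign (x + τ) - Real.sign (y + τ)| := by
        simp [oneBitDist]
    _ ≤ |Δ| / 2 * 2 := by gcongr; exact abs_realSign_sub_realSign_le_two _ _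
    _ = |Δ| := by ring

section Sampling

variable {α : Type*} [MeasurableSpace α] {x y : α → ℝ}

theorem measurable_oneBitDist (Δ : ℝ) (hx : Measurable x) (hy : Measurable y) :
    Measurable fun p : α × ℝ => oneBitDist Δ (x p.1) (y p.1) p.2 := by
  have hsign := measurable_realSign
  unfold oneBitDist
  fun_prop

theorem integrable_oneBitDist (ν : Measure (α × ℝ)) [IsFiniteMeasure ν] (Δ : ℝ)
    (hx : Measurable x) (hy : Measurable y) :
    Integrable (fun p => oneBitDist Δ (x p.1) (y p.1) p.2) ν :=
  .of_bound (measurable_oneBitDist Δ hx hy).aestronglyMeasurable |Δ|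
    (.of_forall fun _ => norm_oneBitDist_le _ _ _ _)

variable {Δ : ℝ} {μ : Measure α} [IsFiniteMeasure μ]

theorem integral_oneBitDist_prod_uniformDither (hΔ : 0 < Δ) (hx : Measurable x) (hy : Measurable y)
    (hxΔ : ∀ a, |x a| ≤ Δ / 2) (hyΔ : ∀ a, |y a| ≤ Δ / 2) :
    ∫ p, oneBitDist Δ (x p.1) (y p.1) p.2 ∂μ.prod (uniformDither Δ) = ∫ a, |x a - y a| ∂μ := by
  rw [integral_prod _ (integrable_oneBitDist _ Δ hx hy)]
  simp only [integral_oneBitDist_uniformDither hΔ (hxΔ _) (hyΔ _)]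

theorem integral_sum_oneBitDist_of_hasLaw (hΔ : 0 < Δ) (hx : Measurable x) (hy : Measurable y)
    (hxΔ : ∀ a, |x a| ≤ Δ / 2) (hyΔ : ∀ a, |y a| ≤ Δ / 2) {κ Ω : Type*} [Fintype κ]
    [MeasurableSpace Ω] {P : Measure Ω} {W : κ → Ω → α × ℝ}
    (hW : ∀ k, HasLaw (W k) (μ.prod (uniformDither Δ)) P) :
    ∫ ω, ∑ k, oneBitDist Δ (x (W k ω).1) (y (W k ω).1) (W k ω).2 ∂P =
      Fintype.card κ * ∫ a, |x a - y a| ∂μ := by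
  have hint := integrable_oneBitDist (μ.prod (uniformDither Δ)) Δ hx hy
  have hterm (k : κ) : ∫ ω, oneBitDist Δ (x (W k ω).1) (y (W k ω).1) (W k ω).2 ∂P =
      ∫ a, |x a - y a| ∂μ :=
    ((hW k).integral_comp hint.aestronglyMeasurable).trans
      (integral_oneBitDist_prod_uniformDither hΔ hx hy hxΔ hyΔ)
  rw [integral_finsetSum]
  · simp only [hterm, Finset.sum_const, Finset.card_univ, nsmul_eq_mul]
  · intro k _
    rw [← (hW k).map_eq] at hint
    exact hint.comp_aemeasurable (hW k).aemeasurable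

end Sampling

theorem sampled_one_bit_l1_expectation_general {n₁ n₂ : ℕ} {Δ : ℝ} (hΔ : 0 < Δ)
    {X Y : Matrix (Fin n₁) (Fin n₂) ℝ}
    (hX : ∀ i j, |X i j| ≤ Δ / 2) (hY : ∀ i j, |Y i j| ≤ Δ / 2)
    {κ Ω : Type*} [Fintype κ] [MeasurableSpace Ω] {P : Measure Ω}
    {W : κ → Ω → (Fin n₁ × Fin n₂) × ℝ}
    (hW : ∀ k, HasLaw (W k) ((uniformIndex n₁ n₂).prod (uniformDither Δ)) P) :
    ∫ ω, ∑ k, oneBitDist Δ (X (W k ω).1.1 (W k ω).1.2) (Y (W k ω).1.1 (W k ω).1.2) (W k ω).2 ∂P =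
      (Fintype.card κ / ((n₁ : ℝ) * n₂)) * matL1 (X - Y) := by
  rw [integral_sum_oneBitDist_of_hasLaw (x := fun p => X p.1 p.2) (y := fun p => Y p.1 p.2) hΔ
    .of_discrete .of_discrete (fun _ => hX _ _) (fun _ => hY _ _) hW, integral_uniformIndex,
    smul_eq_mul, ← mul_assoc, ← div_eq_mul_inv]
  rfl

/-- Unbiasedness of the sampled one-bit distance: for matrices with entries bounded by
`Δ/2`, with i.i.d. uniform indices `(i_k,j_k)` and i.i.d. uniform dithers `τ_k`
independent of the indices (encoded by the i.i.d. family `W k = ((i_k,j_k), τ_k)` with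
product distribution),
`E[Σ_k (Δ/2)|sgn(X_{i_k,j_k}+τ_k) - sgn(Y_{i_k,j_k}+τ_k)|] = (m'/(n₁n₂)) ‖X - Y‖₁`. -/
theorem sampled_one_bit_l1_expectation {n₁ n₂ m' : ℕ} (hn₁ : 0 < n₁) (hn₂ : 0 < n₂)
    (Δ : ℝ) (hΔ : 0 < Δ)
    (X Y : Matrix (Fin n₁) (Fin n₂) ℝ)
    (hX : ∀ i j, |X i j| ≤ Δ / 2) (hY : ∀ i j, |Y i j| ≤ Δ / 2)
    {Ω : Type*} [MeasurableSpace Ω] (P : Measure Ω) [IsProbabilityMeasure P]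
    (W : Fin m' → Ω → (Fin n₁ × Fin n₂) × ℝ)
    (hmeas : ∀ k, Measurable (W k))
    (hindep : iIndepFun W P)
    (hdist : ∀ k, Measure.map (W k) P = (uniformIndex n₁ n₂).prod (uniformDither Δ)) :
    ∫ ω, (∑ k : Fin m',
        Δ / 2 * |Real.sign (X (W k ω).1.1 (W k ω).1.2 + (W k ω).2)
          - Real.sign (Y (W k ω).1.1 (W k ω).1.2 + (W k ω).2)|) ∂P
      = ((m' : ℝ) / ((n₁ : ℝ) * n₂)) * matL1 (X - Y) := by
  simpa only [oneBitDist, Fintype.card_fin] using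
    sampled_one_bit_l1_expectation_general hΔ hX hY fun k => ⟨(hmeas k).aemeasurable, hdist k⟩
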